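/- Let G be a group of type FP_m with finite generating set and word metric, and let χ : G → ℝ be a nonzero character. Then the following are equivalent: (1) χ ∈ Σ^m(G;ℤ); (2) there exists (k₀,…,k_m) ∈ ℕ^{m+1} such that for each q = 0,…,m−1, reduced q-cycles at scale k_q on G_χ bound at scale k_{q+1} on G_χ; (3) there exists k₀ ≥ 0 such that for every k ≥ k₀ there is a chain endomorphism of ℤG-complexes (φ_q)_{q=0,…,m} on (C_q^k(G))_{q=0,…,m} extending the identity on ℤ with v_χ(φ_q(c)) − v_χ(c) > 0 for every nonzero c ∈ C_q^k(G) and every q = 0,…,m. -/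

import Mathlib

open Finsupp

variable {G : Type*} [Group G]

/-- Word length with respect to a generating set `X`. -/
noncomputable def wordLength (X : Finset G) (g : G) : ℕ :=
  sInf {n : ℕ | ∃ w : List G, w.length = n ∧ (∀ x ∈ w, x ∈ X ∨ x⁻¹ ∈ X) ∧ w.prod = g}

/-- The left-invariant word metric `d(g,h) = l(g⁻¹h)`. -/
noncomputable def wordDist (X : Finset G) (g h : G) : ℕ :=
  wordLength X (g⁻¹ * h)

/-- `c` is a chain in `C_q^k(S)`: its support consists of `(q+1)`-tuples of elements of `S`
that are pairwise at distance at most `k`. -/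
def VRChain (X : Finset G) (S : Set G) (q k : ℕ) (c : (Fin (q + 1) → G) →₀ ℤ) : Prop :=
  ∀ σ ∈ c.support, (∀ i, σ i ∈ S) ∧ ∀ i j, wordDist X (σ i) (σ j) ≤ k

/-- The simplicial boundary map `∂_{q+1} : ℤ[G^{q+2}] → ℤ[G^{q+1}]`. -/
noncomputable def bnd (q : ℕ) :
    ((Fin (q + 2) → G) →₀ ℤ) →ₗ[ℤ] ((Fin (q + 1) → G) →₀ ℤ) :=
  Finsupp.lift _ ℤ _
    (fun σ => ∑ i : Fin (q + 2), ((-1 : ℤ) ^ (i : ℕ)) • Finsupp.single (σ ∘ i.succAbove) (1 : ℤ))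

/-- The augmentation `ε : ℤ[G] → ℤ` sending every vertex to `1`. -/
noncomputable def aug : ((Fin 1 → G) →₀ ℤ) →ₗ[ℤ] ℤ :=
  Finsupp.lift ℤ ℤ (Fin 1 → G) (fun _ => (1 : ℤ))

/-- Reduced `q`-cycles at scale `k` on `S` bound at scale `l` on `S`. -/
def BoundsAt (X : Finset G) (S : Set G) : ℕ → ℕ → ℕ → Prop
  | 0, k, l => ∀ z : (Fin 1 → G) →₀ ℤ, VRChain X S 0 k z → aug z = 0 →
      ∃ c : (Fin 2 → G) →₀ ℤ, VRChain X S 1 l c ∧ bnd 0 c = z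
  | (q + 1), k, l => ∀ z : (Fin (q + 2) → G) →₀ ℤ, VRChain X S (q + 1) k z → bnd q z = 0 →
      ∃ c : (Fin (q + 3) → G) →₀ ℤ, VRChain X S (q + 2) l c ∧ bnd (q + 1) c = z

/-- `S ⊆ G` is of type `FP_m`. -/
def TypeFP (X : Finset G) (S : Set G) (m : ℕ) : Prop :=
  ∀ q < m, ∀ k : ℕ, ∃ l ≥ k, BoundsAt X S q k l

/-- A character on `G` is a homomorphism to the additive reals. -/
def IsCharacter (χ : G → ℝ) : Prop :=
  ∀ g h : G, χ (g * h) = χ g + χ h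

/-- Simultaneous left translation on chains, making `ℤ[G^{q+1}]` a `ℤG`-module. -/
noncomputable def lTranslate (g : G) (q : ℕ) :
    ((Fin (q + 1) → G) →₀ ℤ) →ₗ[ℤ] ((Fin (q + 1) → G) →₀ ℤ) :=
  Finsupp.lmapDomain ℤ ℤ (fun σ i => g * σ i)

/-- A chain endomorphism of `ℤG`-complexes on `(C_q^k(G))_{q=0,…,m}` extending the identity
on `ℤ`: each `φ q` maps scale-`k` chains to scale-`k` chains, is `G`-equivariant,
satisfies `ε ∘ φ₀ = ε` and commutes with the boundary maps. -/
def IsChainEndo (X : Finset G) (k m : ℕ)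
    (φ : ∀ q : ℕ, ((Fin (q + 1) → G) →₀ ℤ) →ₗ[ℤ] ((Fin (q + 1) → G) →₀ ℤ)) : Prop :=
  (∀ q ≤ m, ∀ c, VRChain X Set.univ q k c → VRChain X Set.univ q k (φ q c)) ∧
  (∀ q ≤ m, ∀ (g : G) (c), VRChain X Set.univ q k c →
    φ q (lTranslate g q c) = lTranslate g q (φ q c)) ∧
  (∀ c : (Fin 1 → G) →₀ ℤ, VRChain X Set.univ 0 k c → aug (φ 0 c) = aug c) ∧
  (∀ q : ℕ, q + 1 ≤ m → ∀ c : (Fin (q + 2) → G) →₀ ℤ, VRChain X Set.univ (q + 1) k c →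
    bnd q (φ (q + 1) c) = φ q (bnd q c))

/-- The valuation of a simplex: `v(σ) = min_i χ(g_i)` (with values in `EReal`). -/
noncomputable def vsimp (χ : G → ℝ) {q : ℕ} (σ : Fin (q + 1) → G) : EReal :=
  ⨅ i, (χ (σ i) : EReal)

/-- The valuation of a chain: the minimum of the valuations of the simplices in its support
(`⊤` for the zero chain). -/
noncomputable def vchain (χ : G → ℝ) {q : ℕ} (c : (Fin (q + 1) → G) →₀ ℤ) : EReal :=
  ⨅ σ ∈ c.support, vsimp χ σ


section ChainAlgebra

/-- The simplicial boundary `ℤ[G^{n+1}] → ℤ[Gⁿ]` of the augmented complex: for `n = q + 1` it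
is `bnd q`, and for `n = 0` it is the augmentation. -/
noncomputable def augBnd (n : ℕ) : ((Fin (n + 1) → G) →₀ ℤ) →ₗ[ℤ] ((Fin n → G) →₀ ℤ) :=
  Finsupp.lift _ ℤ _
    (fun σ => ∑ i : Fin (n + 1), ((-1 : ℤ) ^ (i : ℕ)) • Finsupp.single (σ ∘ i.succAbove) (1 : ℤ))

/-- The map on chains induced by a map of vertices. -/
noncomputable def vertexMap (f : G → G) (n : ℕ) :
    ((Fin n → G) →₀ ℤ) →ₗ[ℤ] ((Fin n → G) →₀ ℤ) :=
  Finsupp.lmapDomain ℤ ℤ (fun σ i => f (σ i))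

/-- The cone operator with apex `g`. -/
noncomputable def coneMap (g : G) (n : ℕ) :
    ((Fin n → G) →₀ ℤ) →ₗ[ℤ] ((Fin (n + 1) → G) →₀ ℤ) :=
  Finsupp.lmapDomain ℤ ℤ (fun σ => (Fin.cons g σ : Fin (n + 1) → G))

/-- Chains all of whose vertices lie in `S`. -/
def chainsIn (S : Set G) (n : ℕ) : Submodule ℤ ((Fin n → G) →₀ ℤ) :=
  Finsupp.supported ℤ ℤ {σ | ∀ i, σ i ∈ S}

/-- Chains supported on tuples of diameter at most `k`. -/
def chainsAtScale (X : Finset G) (k n : ℕ) : Submodule ℤ ((Fin n → G) →₀ ℤ) :=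
  Finsupp.supported ℤ ℤ {σ | ∀ i j, wordDist X (σ i) (σ j) ≤ k}

theorem map_mem_of_mem_supported {α M : Type*} [AddCommGroup M] (F : (α →₀ ℤ) →ₗ[ℤ] M)
    (N : Submodule ℤ M) {A : Set α} (h : ∀ σ ∈ A, F (single σ 1) ∈ N) {c : α →₀ ℤ}
    (hc : c ∈ Finsupp.supported ℤ ℤ A) : F c ∈ N := by
  rw [Finsupp.supported_eq_span_single] at hc
  have : Submodule.span ℤ ((fun i => single i (1 : ℤ)) '' A) ≤ N.comap F :=
    Submodule.span_le.2 (by rintro _ ⟨σ, hσ, rfl⟩; exact h σ hσ)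
  exact this hc

theorem eq_of_mem_supported {α M : Type*} [AddCommGroup M] {F F' : (α →₀ ℤ) →ₗ[ℤ] M}
    {A : Set α} (h : ∀ σ ∈ A, F (single σ 1) = F' (single σ 1)) {c : α →₀ ℤ}
    (hc : c ∈ Finsupp.supported ℤ ℤ A) : F c = F' c := by
  have := map_mem_of_mem_supported (F - F') ⊥ (A := A) (fun σ hσ => by simp [h σ hσ]) hc
  simpa [sub_eq_zero] using this

theorem linearMap_eq_of_single {α M : Type*} [AddCommGroup M] {F F' : (α →₀ ℤ) →ₗ[ℤ] M}
    (h : ∀ σ, F (single σ 1) = F' (single σ 1)) (c : α →₀ ℤ) : F c = F' c := by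
  have : F = F' := by ext σ; simpa using h σ
  rw [this]

theorem single_mem_supported {α : Type*} {A : Set α} {σ : α} (h : σ ∈ A) :
    single σ (1 : ℤ) ∈ Finsupp.supported ℤ ℤ A :=
  Finsupp.single_mem_supported ℤ 1 h

omit [Group G] in
theorem augBnd_single (n : ℕ) (σ : Fin (n + 1) → G) :
    augBnd n (single σ 1) =
      ∑ i : Fin (n + 1), ((-1 : ℤ) ^ (i : ℕ)) • Finsupp.single (σ ∘ i.succAbove) (1 : ℤ) := by
  simp [augBnd]

omit [Group G] in
theorem vertexMap_single (f : G → G) (n : ℕ) (σ : Fin n → G) :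
    vertexMap f n (single σ 1) = single (fun i => f (σ i)) 1 := by
  simp [vertexMap]

omit [Group G] in
theorem coneMap_single (g : G) (n : ℕ) (σ : Fin n → G) :
    coneMap g n (single σ 1) = single (Fin.cons g σ : Fin (n + 1) → G) 1 := by
  simp [coneMap]

omit [Group G] in
theorem augBnd_succ (q : ℕ) : augBnd (G := G) (q + 1) = bnd q := rfl

omit [Group G] in
theorem augBnd_zero (c : (Fin 1 → G) →₀ ℤ) : augBnd 0 c = single default (aug c) := by
  refine linearMap_eq_of_single (F := augBnd 0) (F' := (Finsupp.lsingle default).comp aug)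
    (fun σ => ?_) c
  simp [augBnd_single, aug, Subsingleton.elim _ (default : Fin 0 → G)]

omit [Group G] in
theorem augBnd_vertexMap (f : G → G) (n : ℕ) (c : (Fin (n + 1) → G) →₀ ℤ) :
    augBnd n (vertexMap f (n + 1) c) = vertexMap f n (augBnd n c) := by
  refine linearMap_eq_of_single (F := (augBnd n).comp (vertexMap f (n + 1)))
    (F' := (vertexMap f n).comp (augBnd n)) (fun σ => ?_) c
  simp only [LinearMap.comp_apply, vertexMap_single, augBnd_single, map_sum, map_smul]
  rfl

omit [Group G] in
theorem vertexMap_zero (f : G → G) (c : (Fin 0 → G) →₀ ℤ) : vertexMap f 0 c = c := by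
  refine linearMap_eq_of_single (F := vertexMap f 0) (F' := LinearMap.id) (fun σ => ?_) c
  simp [vertexMap_single, Subsingleton.elim _ σ]

omit [Group G] in
theorem vertexMap_vertexMap (f f' : G → G) (n : ℕ) (c : (Fin n → G) →₀ ℤ) :
    vertexMap f n (vertexMap f' n c) = vertexMap (f ∘ f') n c := by
  refine linearMap_eq_of_single (F := (vertexMap f n).comp (vertexMap f' n))
    (F' := vertexMap (f ∘ f') n) (fun σ => ?_) c
  simp [vertexMap_single]

omit [Group G] in
theorem vertexMap_id (n : ℕ) (c : (Fin n → G) →₀ ℤ) : vertexMap id n c = c := by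
  refine linearMap_eq_of_single (F := vertexMap id n) (F' := LinearMap.id) (fun σ => ?_) c
  simp [vertexMap_single]

omit [Group G] in
theorem augBnd_coneMap_zero (g : G) (c : (Fin 0 → G) →₀ ℤ) : augBnd 0 (coneMap g 0 c) = c := by
  refine linearMap_eq_of_single (F := (augBnd 0).comp (coneMap g 0))
    (F' := LinearMap.id) (fun σ => ?_) c
  simp [coneMap_single, augBnd_single, Subsingleton.elim _ σ]

omit [Group G] in
theorem augBnd_coneMap_succ (g : G) (n : ℕ) (c : (Fin (n + 1) → G) →₀ ℤ) :
    augBnd (n + 1) (coneMap g (n + 1) c) = c - coneMap g n (augBnd n c) := by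
  refine linearMap_eq_of_single (F := (augBnd (n + 1)).comp (coneMap g (n + 1)))
    (F' := LinearMap.id - (coneMap g n).comp (augBnd n)) (fun σ => ?_) c
  simp only [LinearMap.comp_apply, LinearMap.sub_apply, LinearMap.id_apply, coneMap_single,
    augBnd_single, map_sum, map_smul]
  rw [Fin.sum_univ_succ, sub_eq_add_neg, ← Finset.sum_neg_distrib]
  congr 1
  · simp only [Fin.val_zero, pow_zero, one_smul]
    rfl
  · refine Finset.sum_congr rfl fun i _ => ?_
    have : (Fin.cons g σ : Fin (n + 2) → G) ∘ i.succ.succAbove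
        = (Fin.cons g (σ ∘ i.succAbove) : Fin (n + 1) → G) := by
      funext j
      refine Fin.cases ?_ (fun j => ?_) j <;> simp
    rw [this, Fin.val_succ, pow_succ, mul_neg_one, neg_smul]

omit [Group G] in
theorem augBnd_augBnd (n : ℕ) (c : (Fin (n + 2) → G) →₀ ℤ) :
    augBnd n (augBnd (n + 1) c) = 0 := by
  induction n with
  | zero =>
    refine linearMap_eq_of_single (F := (augBnd 0).comp (augBnd 1)) (F' := 0) (fun σ => ?_) c
    rw [← Fin.cons_self_tail σ, ← coneMap_single]
    simp [augBnd_coneMap_succ, augBnd_coneMap_zero]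
  | succ n ih =>
    refine linearMap_eq_of_single (F := (augBnd (n + 1)).comp (augBnd (n + 2))) (F' := 0)
      (fun σ => ?_) c
    rw [← Fin.cons_self_tail σ, ← coneMap_single]
    simp [augBnd_coneMap_succ, ih]

omit [Group G] in
theorem augBnd_mem_chainsIn {S : Set G} {n : ℕ} {c : (Fin (n + 1) → G) →₀ ℤ}
    (hc : c ∈ chainsIn S (n + 1)) : augBnd n c ∈ chainsIn S n := by
  refine map_mem_of_mem_supported _ _ (fun σ hσ => ?_) hc
  rw [augBnd_single]
  exact Submodule.sum_mem _ fun i _ => Submodule.smul_mem _ _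
    (single_mem_supported fun j => hσ (i.succAbove j))

theorem augBnd_mem_chainsAtScale {X : Finset G} {k n : ℕ} {c : (Fin (n + 1) → G) →₀ ℤ}
    (hc : c ∈ chainsAtScale X k (n + 1)) : augBnd n c ∈ chainsAtScale X k n := by
  refine map_mem_of_mem_supported _ _ (fun σ hσ => ?_) hc
  rw [augBnd_single]
  exact Submodule.sum_mem _ fun i _ => Submodule.smul_mem _ _
    (single_mem_supported fun j j' => hσ (i.succAbove j) (i.succAbove j'))

omit [Group G] in
theorem chainsIn_mono {S T : Set G} (h : S ⊆ T) (n : ℕ) : chainsIn S n ≤ chainsIn T n :=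
  Finsupp.supported_mono fun _ hσ i => h (hσ i)

theorem chainsAtScale_mono (X : Finset G) {k l : ℕ} (h : k ≤ l) (n : ℕ) :
    chainsAtScale X k n ≤ chainsAtScale X l n :=
  Finsupp.supported_mono fun _ hσ i j => (hσ i j).trans h

omit [Group G] in
theorem vertexMap_mem_chainsIn {S T : Set G} {f : G → G} (hf : ∀ x ∈ S, f x ∈ T) {n : ℕ}
    {c : (Fin n → G) →₀ ℤ} (hc : c ∈ chainsIn S n) : vertexMap f n c ∈ chainsIn T n := by
  refine map_mem_of_mem_supported _ _ (fun σ hσ => ?_) hc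
  rw [vertexMap_single]
  exact single_mem_supported fun i => hf _ (hσ i)

theorem vertexMap_mem_chainsAtScale {X : Finset G} {k l : ℕ} {f : G → G}
    (hf : ∀ x y, wordDist X x y ≤ k → wordDist X (f x) (f y) ≤ l) {n : ℕ}
    {c : (Fin n → G) →₀ ℤ} (hc : c ∈ chainsAtScale X k n) :
    vertexMap f n c ∈ chainsAtScale X l n := by
  refine map_mem_of_mem_supported _ _ (fun σ hσ => ?_) hc
  rw [vertexMap_single]
  exact single_mem_supported fun i j => hf _ _ (hσ i j)

theorem wordDist_mul_left (X : Finset G) (g x y : G) :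
    wordDist X (g * x) (g * y) = wordDist X x y := by
  simp [wordDist, mul_assoc]

theorem vRChain_iff {X : Finset G} {S : Set G} {q k : ℕ} {c : (Fin (q + 1) → G) →₀ ℤ} :
    VRChain X S q k c ↔ c ∈ chainsIn S (q + 1) ∧ c ∈ chainsAtScale X k (q + 1) := by
  simp only [VRChain, chainsIn, chainsAtScale, Finsupp.mem_supported, Set.subset_def,
    Finset.mem_coe, Set.mem_ofPred_eq]
  exact ⟨fun h => ⟨fun σ hσ => (h σ hσ).1, fun σ hσ => (h σ hσ).2⟩,
    fun h σ hσ => ⟨h.1 σ hσ, h.2 σ hσ⟩⟩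

omit [Group G] in
theorem mem_chainsIn_univ {n : ℕ} (c : (Fin n → G) →₀ ℤ) : c ∈ chainsIn Set.univ n := by
  simp [chainsIn]

theorem vRChain_univ_iff {X : Finset G} {q k : ℕ} {c : (Fin (q + 1) → G) →₀ ℤ} :
    VRChain X Set.univ q k c ↔ c ∈ chainsAtScale X k (q + 1) := by
  simp [vRChain_iff, mem_chainsIn_univ]

theorem boundsAt_iff {X : Finset G} {S : Set G} {q k l : ℕ} :
    BoundsAt X S q k l ↔ ∀ z ∈ chainsIn S (q + 1), z ∈ chainsAtScale X k (q + 1) →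
      augBnd q z = 0 → ∃ c ∈ chainsIn S (q + 2), c ∈ chainsAtScale X l (q + 2) ∧
        augBnd (q + 1) c = z := by
  cases q with
  | zero =>
    simp only [BoundsAt, vRChain_iff, augBnd_zero, Finsupp.single_eq_zero, augBnd_succ, and_imp,
      and_assoc]
  | succ q => simp only [BoundsAt, vRChain_iff, augBnd_succ, and_imp, and_assoc]

/-- A translation-invariant relation that is solvable simplex by simplex has an equivariant
linear solution. -/
theorem exists_equivariant_lift {n p : ℕ}
    (R : (Fin (n + 1) → G) → ((Fin p → G) →₀ ℤ) → Prop)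
    (hR : ∀ g σ c, R σ c → R (fun i => g * σ i) (vertexMap (g * ·) p c))
    (hex : ∀ σ, ∃ c, R σ c) :
    ∃ F : ((Fin (n + 1) → G) →₀ ℤ) →ₗ[ℤ] ((Fin p → G) →₀ ℤ),
      (∀ g c, F (vertexMap (g * ·) (n + 1) c) = vertexMap (g * ·) p (F c)) ∧
      ∀ σ, R σ (F (single σ 1)) := by
  choose ψ hψ using hex
  let F : ((Fin (n + 1) → G) →₀ ℤ) →ₗ[ℤ] ((Fin p → G) →₀ ℤ) :=
    Finsupp.lift _ ℤ _ fun σ => vertexMap (σ 0 * ·) p (ψ fun i => (σ 0)⁻¹ * σ i)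
  have hF : ∀ σ, F (single σ 1) = vertexMap (σ 0 * ·) p (ψ fun i => (σ 0)⁻¹ * σ i) := by
    intro σ
    simp [F]
  refine ⟨F, fun g c => ?_, fun σ => ?_⟩
  · refine linearMap_eq_of_single (F := F.comp (vertexMap (g * ·) (n + 1)))
      (F' := (vertexMap (g * ·) p).comp F) (fun σ => ?_) c
    simp only [LinearMap.comp_apply, vertexMap_single, hF, vertexMap_vertexMap]
    congr 2
    · funext x
      simp [mul_assoc]
    · simp [mul_assoc]
  · rw [hF]
    simpa using hR (σ 0) _ _ (hψ fun i => (σ 0)⁻¹ * σ i)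

end ChainAlgebra

section WordMetric

variable {X : Finset G}

theorem exists_word (hX : Subgroup.closure (X : Set G) = ⊤) (g : G) :
    ∃ w : List G, w.length = wordLength X g ∧ (∀ x ∈ w, x ∈ X ∨ x⁻¹ ∈ X) ∧ w.prod = g := by
  have hg : g ∈ (Subgroup.closure (X : Set G)).toSubmonoid := hX ▸ Subgroup.mem_top g
  rw [Subgroup.closure_toSubmonoid] at hg
  obtain ⟨w, hw, hp⟩ := Submonoid.exists_list_of_mem_closure hg
  exact Nat.sInf_mem (s := {n : ℕ | ∃ w : List G, w.length = n ∧ (∀ x ∈ w, x ∈ X ∨ x⁻¹ ∈ X) ∧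
    w.prod = g}) ⟨_, w, rfl, hw, hp⟩

theorem wordLength_le {w : List G} (hw : ∀ x ∈ w, x ∈ X ∨ x⁻¹ ∈ X) :
    wordLength X w.prod ≤ w.length :=
  Nat.sInf_le ⟨w, rfl, hw, rfl⟩

theorem wordLength_mul_le (hX : Subgroup.closure (X : Set G) = ⊤) (g h : G) :
    wordLength X (g * h) ≤ wordLength X g + wordLength X h := by
  obtain ⟨w, hw, hw', rfl⟩ := exists_word hX g
  obtain ⟨u, hu, hu', rfl⟩ := exists_word hX h
  rw [← hw, ← hu, ← List.prod_append, ← List.length_append]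
  refine wordLength_le fun x hx => ?_
  rcases List.mem_append.1 hx with h | h
  exacts [hw' x h, hu' x h]

theorem wordLength_inv_le (hX : Subgroup.closure (X : Set G) = ⊤) (g : G) :
    wordLength X g⁻¹ ≤ wordLength X g := by
  obtain ⟨w, hw, hw', rfl⟩ := exists_word hX g
  rw [← hw, List.prod_inv_reverse]
  refine (wordLength_le fun x hx => ?_).trans (by simp)
  simp only [List.mem_reverse, List.mem_map] at hx
  obtain ⟨y, hy, rfl⟩ := hx
  simpa [or_comm] using hw' y hy

theorem wordDist_mul_right_le (hX : Subgroup.closure (X : Set G) = ⊤) (t : G) {k : ℕ} {x y : G}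
    (h : wordDist X x y ≤ k) {a b : G} (ha : a = x ∨ a = x * t) (hb : b = y ∨ b = y * t) :
    wordDist X a b ≤ k + 2 * wordLength X t := by
  have ht := wordLength_inv_le hX t
  have h1 := wordLength_mul_le hX (x⁻¹ * y) t
  have h2 := wordLength_mul_le hX t⁻¹ (x⁻¹ * y)
  have h3 := wordLength_mul_le hX t⁻¹ (x⁻¹ * y * t)
  simp only [wordDist] at h ⊢
  rcases ha with rfl | rfl <;> rcases hb with rfl | rfl <;>
    simp only [mul_inv_rev, mul_assoc] at * <;> omega

theorem finite_wordLength_le (hX : Subgroup.closure (X : Set G) = ⊤) (k : ℕ) :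
    {g : G | wordLength X g ≤ k}.Finite := by
  have hY : Finite {x : G | x ∈ X ∨ x⁻¹ ∈ X} := by
    refine Set.Finite.to_subtype (X.finite_toSet.union ?_)
    exact X.finite_toSet.preimage inv_injective.injOn
  refine ((List.finite_length_le {x : G | x ∈ X ∨ x⁻¹ ∈ X} k).image
    fun w => (w.map Subtype.val).prod).subset fun g hg => ?_
  obtain ⟨w, hw, hw', rfl⟩ := exists_word hX g
  refine ⟨w.attach.map fun x => ⟨x.1, hw' _ x.2⟩, ?_, ?_⟩
  · simpa [hw] using hg
  · simp [Function.comp_def]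

theorem finite_simplices (hX : Subgroup.closure (X : Set G) = ⊤) (k n : ℕ) :
    {σ : Fin (n + 1) → G | (∀ i j, wordDist X (σ i) (σ j) ≤ k) ∧ σ 0 = 1}.Finite := by
  refine (Set.Finite.pi' fun _ => finite_wordLength_le hX k).subset fun σ hσ i => ?_
  simpa [wordDist, hσ.2] using hσ.1 0 i

end WordMetric

section HalfSpace

variable {χ : G → ℝ}

theorem IsCharacter.map_one (hχ : IsCharacter χ) : χ 1 = 0 := by
  have := hχ 1 1
  simp at this
  exact this

theorem IsCharacter.map_inv (hχ : IsCharacter χ) (g : G) : χ g⁻¹ = -χ g := by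
  have := hχ g⁻¹ g
  rw [inv_mul_cancel, hχ.map_one] at this
  linarith

theorem IsCharacter.map_pow (hχ : IsCharacter χ) (g : G) (n : ℕ) : χ (g ^ n) = n * χ g := by
  induction n with
  | zero => simp [hχ.map_one]
  | succ n ih =>
    rw [pow_succ, hχ, ih]
    push_cast
    ring

theorem IsCharacter.exists_pos (hχ : IsCharacter χ) (hne : ∃ g, χ g ≠ 0) : ∃ t, 0 < χ t := by
  obtain ⟨g, hg⟩ := hne
  rcases hg.lt_or_gt with h | h
  · exact ⟨g⁻¹, by rw [hχ.map_inv]; linarith⟩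
  · exact ⟨g, h⟩

theorem IsCharacter.exists_ge (hχ : IsCharacter χ) (hne : ∃ g, χ g ≠ 0) (D : ℝ) :
    ∃ t, 0 ≤ χ t ∧ D ≤ χ t := by
  obtain ⟨t, ht⟩ := hχ.exists_pos hne
  obtain ⟨n, hn⟩ := Archimedean.arch D ht
  refine ⟨t ^ n, ?_, ?_⟩
  · rw [hχ.map_pow]; positivity
  · rwa [hχ.map_pow, ← nsmul_eq_mul]

/-- Chains in the half-space `{g | r ≤ χ g}`. -/
abbrev chainsAbove (χ : G → ℝ) (r : ℝ) (n : ℕ) : Submodule ℤ ((Fin n → G) →₀ ℤ) :=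
  chainsIn {g | r ≤ χ g} n

omit [Group G] in
theorem chainsAbove_anti (χ : G → ℝ) {r s : ℝ} (h : r ≤ s) (n : ℕ) :
    chainsAbove χ s n ≤ chainsAbove χ r n :=
  chainsIn_mono (fun _ hg => h.trans hg) n

theorem vertexMap_mul_left_mem_chainsAbove (hχ : IsCharacter χ) {r s : ℝ} (g : G)
    (hs : s ≤ r + χ g) {n : ℕ} {c : (Fin n → G) →₀ ℤ} (hc : c ∈ chainsAbove χ r n) :
    vertexMap (g * ·) n c ∈ chainsAbove χ s n := by
  refine vertexMap_mem_chainsIn (fun x hx => ?_) hc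
  have : r ≤ χ x := hx
  change s ≤ χ (g * x)
  rw [hχ]
  linarith

theorem vertexMap_mul_right_mem_chainsAbove (hχ : IsCharacter χ) {r s : ℝ} (g : G)
    (hs : s ≤ r + χ g) {n : ℕ} {c : (Fin n → G) →₀ ℤ} (hc : c ∈ chainsAbove χ r n) :
    vertexMap (· * g) n c ∈ chainsAbove χ s n := by
  refine vertexMap_mem_chainsIn (fun x hx => ?_) hc
  have : r ≤ χ x := hx
  change s ≤ χ (x * g)
  rw [hχ]
  linarith

theorem vertexMap_mul_left_mem_chainsAtScale {X : Finset G} {k n : ℕ} (g : G)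
    {c : (Fin n → G) →₀ ℤ} (hc : c ∈ chainsAtScale X k n) :
    vertexMap (g * ·) n c ∈ chainsAtScale X k n :=
  vertexMap_mem_chainsAtScale (fun x y h => by rwa [wordDist_mul_left]) hc

omit [Group G] in
theorem exists_mem_chainsAbove (χ : G → ℝ) {n : ℕ} (c : (Fin (n + 1) → G) →₀ ℤ) :
    ∃ r, c ∈ chainsAbove χ r (n + 1) := by
  obtain ⟨r, hr⟩ := ((c.support ×ˢ Finset.univ).image
    fun p : (Fin (n + 1) → G) × Fin (n + 1) => χ (p.1 p.2)).finite_toSet.bddBelow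
  refine ⟨r, (Finsupp.mem_supported _ _).2 fun σ hσ i => hr ?_⟩
  simp only [Finset.coe_image, Set.mem_image]
  exact ⟨(σ, i), by simpa using hσ, rfl⟩

/-- A linear map raises the valuation of the simplex `σ` by at least `δ`. -/
def Raises (χ : G → ℝ) {n p : ℕ} (F : ((Fin n → G) →₀ ℤ) →ₗ[ℤ] ((Fin p → G) →₀ ℤ))
    (δ : ℝ) (σ : Fin n → G) : Prop :=
  ∀ r, (∀ i, r ≤ χ (σ i)) → F (single σ 1) ∈ chainsAbove χ (r + δ) p

omit [Group G] in
theorem Raises.anti {n p : ℕ} {F : ((Fin n → G) →₀ ℤ) →ₗ[ℤ] ((Fin p → G) →₀ ℤ)}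
    {δ δ' : ℝ} {σ : Fin n → G} (h : Raises χ F δ σ) (hδ : δ' ≤ δ) : Raises χ F δ' σ :=
  fun r hr => chainsAbove_anti χ (by linarith) _ (h r hr)

omit [Group G] in
theorem raises_of_mem {n p : ℕ} {F : ((Fin n → G) →₀ ℤ) →ₗ[ℤ] ((Fin p → G) →₀ ℤ)}
    {σ : Fin n → G} {s : ℝ} (h : F (single σ 1) ∈ chainsAbove χ s p) (j : Fin n) :
    Raises χ F (s - χ (σ j)) σ :=
  fun r hr => chainsAbove_anti χ (by linarith [hr j]) _ h

omit [Group G] in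
theorem map_mem_chainsAbove {n p : ℕ} {A : Set (Fin n → G)}
    {F : ((Fin n → G) →₀ ℤ) →ₗ[ℤ] ((Fin p → G) →₀ ℤ)} {δ r : ℝ}
    (hF : ∀ σ ∈ A, Raises χ F δ σ)
    {c : (Fin n → G) →₀ ℤ} (hc : c ∈ chainsAbove χ r n) (hA : c ∈ Finsupp.supported ℤ ℤ A) :
    F c ∈ chainsAbove χ (r + δ) p := by
  have : c ∈ Finsupp.supported ℤ ℤ ({σ : Fin n → G | ∀ i, r ≤ χ (σ i)} ∩ A) := by
    rw [Finsupp.supported_inter]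
    exact ⟨hc, hA⟩
  exact map_mem_of_mem_supported _ _ (fun σ hσ => hF σ hσ.2 r hσ.1) this

/-- By cocompactness, a shift of valuations that is eventually available simplex by simplex is
eventually available uniformly. -/
theorem eventually_forall_raises {X : Finset G} (hX : Subgroup.closure (X : Set G) = ⊤)
    (hχ : IsCharacter χ) {k n p : ℕ}
    {F : ((Fin (n + 1) → G) →₀ ℤ) →ₗ[ℤ] ((Fin p → G) →₀ ℤ)}
    (hF : ∀ g, ∀ c ∈ chainsAtScale X k (n + 1),
      F (vertexMap (g * ·) (n + 1) c) = vertexMap (g * ·) p (F c)) {l : Filter ℝ}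
    (h : ∀ σ : Fin (n + 1) → G, (∀ i j, wordDist X (σ i) (σ j) ≤ k) →
      ∀ᶠ δ in l, Raises χ F δ σ) :
    ∀ᶠ δ in l, ∀ σ : Fin (n + 1) → G, (∀ i j, wordDist X (σ i) (σ j) ≤ k) →
      Raises χ F δ σ := by
  have := (Filter.eventually_all_finite (finite_simplices hX k n)).2 fun σ hσ => h σ hσ.1
  filter_upwards [this] with δ hδ σ hσ r hr
  have hσ' : ∀ i j, wordDist X ((σ 0)⁻¹ * σ i) ((σ 0)⁻¹ * σ j) ≤ k := fun i j => by
    rw [wordDist_mul_left]; exact hσ i j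
  have key := hδ (fun i => (σ 0)⁻¹ * σ i) ⟨hσ', by simp⟩ (r - χ (σ 0)) fun i => by
    rw [hχ, hχ.map_inv]
    linarith [hr i]
  have e : single σ (1 : ℤ) =
      vertexMap (σ 0 * ·) (n + 1) (single (fun i => (σ 0)⁻¹ * σ i) 1) := by
    simp [vertexMap_single]
  rw [e, hF _ _ (single_mem_supported hσ')]
  exact vertexMap_mul_left_mem_chainsAbove hχ _ (by linarith) key

theorem BoundsAt.translate {X : Finset G} (hχ : IsCharacter χ) {q k l : ℕ}
    (h : BoundsAt X {g | 0 ≤ χ g} q k l) (g : G) {z : (Fin (q + 1) → G) →₀ ℤ}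
    (hz : z ∈ chainsAbove χ (χ g) (q + 1)) (hk : z ∈ chainsAtScale X k (q + 1))
    (hb : augBnd q z = 0) :
    ∃ c ∈ chainsAbove χ (χ g) (q + 2), c ∈ chainsAtScale X l (q + 2) ∧ augBnd (q + 1) c = z := by
  obtain ⟨c, hc, hl, hcz⟩ : ∃ c ∈ chainsAbove χ 0 (q + 2), c ∈ chainsAtScale X l (q + 2) ∧
      augBnd (q + 1) c = vertexMap (g⁻¹ * ·) (q + 1) z :=
    boundsAt_iff.1 h _ (vertexMap_mul_left_mem_chainsAbove hχ _ (by simp [hχ.map_inv]) hz)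
      (vertexMap_mul_left_mem_chainsAtScale _ hk) (by rw [augBnd_vertexMap, hb, map_zero])
  refine ⟨vertexMap (g * ·) _ c, vertexMap_mul_left_mem_chainsAbove hχ _ (by simp) hc,
    vertexMap_mul_left_mem_chainsAtScale _ hl, ?_⟩
  rw [augBnd_vertexMap, hcz, vertexMap_vertexMap]
  convert vertexMap_id _ z
  funext x
  simp

omit [Group G] in
theorem le_vchain {r : ℝ} {q : ℕ} {c : (Fin (q + 1) → G) →₀ ℤ} :
    (r : EReal) ≤ vchain χ c ↔ c ∈ chainsAbove χ r (q + 1) := by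
  simp only [vchain, vsimp, le_iInf_iff, EReal.coe_le_coe_iff, chainsAbove, chainsIn,
    Finsupp.mem_supported, Set.subset_def, Finset.mem_coe, Set.mem_ofPred_eq]

omit [Group G] in
theorem exists_vchain_eq {q : ℕ} {c : (Fin (q + 1) → G) →₀ ℤ} (hc : c ≠ 0) :
    ∃ σ ∈ c.support, ∃ i, vchain χ c = (χ (σ i) : EReal) := by
  obtain ⟨p, hp, hmin⟩ := (c.support ×ˢ (Finset.univ : Finset (Fin (q + 1)))).exists_min_image
    (fun p => χ (p.1 p.2)) ((Finsupp.support_nonempty_iff.2 hc).product Finset.univ_nonempty)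
  simp only [Finset.mem_product, Finset.mem_univ, and_true, Prod.forall] at hp hmin
  refine ⟨p.1, hp, p.2, le_antisymm (iInf₂_le_of_le p.1 hp (iInf_le _ p.2)) (le_vchain.2 ?_)⟩
  exact (Finsupp.mem_supported _ _).2 fun σ hσ i => hmin σ i hσ

end HalfSpace

section Prism

/-- The chain homotopy from the identity to right translation by `t`. -/
noncomputable def prism (t : G) : ∀ n : ℕ, ((Fin n → G) →₀ ℤ) →ₗ[ℤ] ((Fin (n + 1) → G) →₀ ℤ)
  | 0 => 0
  | n + 1 => Finsupp.lift _ ℤ _ fun σ => coneMap (σ 0) (n + 1)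
      (vertexMap (· * t) (n + 1) (single σ 1) - single σ 1 -
        prism t n (augBnd n (single σ 1)))

theorem prism_single (t : G) (n : ℕ) (σ : Fin (n + 1) → G) :
    prism t (n + 1) (single σ 1) = coneMap (σ 0) (n + 1)
      (vertexMap (· * t) (n + 1) (single σ 1) - single σ 1 -
        prism t n (augBnd n (single σ 1))) := by
  simp [prism]

theorem augBnd_prism (t : G) (n : ℕ) (c : (Fin (n + 1) → G) →₀ ℤ) :
    augBnd (n + 1) (prism t (n + 1) c) =
      vertexMap (· * t) (n + 1) c - c - prism t n (augBnd n c) := by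
  induction n with
  | zero =>
    refine linearMap_eq_of_single (F := (augBnd 1).comp (prism t 1))
      (F' := vertexMap (· * t) 1 - LinearMap.id - (prism t 0).comp (augBnd 0)) (fun σ => ?_) c
    simp only [LinearMap.comp_apply, LinearMap.sub_apply, LinearMap.id_apply, prism_single]
    rw [augBnd_coneMap_succ, sub_eq_self]
    simp [prism, augBnd_vertexMap, vertexMap_zero]
  | succ n ih =>
    refine linearMap_eq_of_single (F := (augBnd (n + 2)).comp (prism t (n + 2)))
      (F' := vertexMap (· * t) (n + 2) - LinearMap.id - (prism t (n + 1)).comp (augBnd (n + 1)))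
      (fun σ => ?_) c
    simp only [LinearMap.comp_apply, LinearMap.sub_apply, LinearMap.id_apply, prism_single]
    rw [augBnd_coneMap_succ, sub_eq_self, map_sub (augBnd (n + 1)), map_sub (augBnd (n + 1)), ih,
      augBnd_augBnd, augBnd_vertexMap]
    simp

omit [Group G] in
theorem coneMap_mem_chainsIn {S : Set G} {g : G} (hg : g ∈ S) {n : ℕ} {c : (Fin n → G) →₀ ℤ}
    (hc : c ∈ chainsIn S n) : coneMap g n c ∈ chainsIn S (n + 1) := by
  refine map_mem_of_mem_supported _ _ (fun σ hσ => ?_) hc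
  rw [coneMap_single]
  exact single_mem_supported fun i => Fin.cases hg hσ i

theorem prism_mem_chainsIn {t : G} {S T : Set G} (hST : S ⊆ T) (ht : ∀ x ∈ S, x * t ∈ T) {n : ℕ}
    {c : (Fin n → G) →₀ ℤ} (hc : c ∈ chainsIn S n) : prism t n c ∈ chainsIn T (n + 1) := by
  induction n with
  | zero => simp [prism]
  | succ n ih =>
    refine map_mem_of_mem_supported _ _ (fun σ hσ => ?_) hc
    rw [prism_single]
    have h1 : single σ (1 : ℤ) ∈ chainsIn S (n + 1) := single_mem_supported hσ
    exact coneMap_mem_chainsIn (hST (hσ 0)) (Submodule.sub_mem _ (Submodule.sub_mem _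
      (vertexMap_mem_chainsIn ht h1) (chainsIn_mono hST _ h1)) (ih (augBnd_mem_chainsIn h1)))

theorem prism_mem_chainsAtScale {X : Finset G} (hX : Subgroup.closure (X : Set G) = ⊤) (t : G)
    {k n : ℕ} {c : (Fin n → G) →₀ ℤ} (hc : c ∈ chainsAtScale X k n) :
    prism t n c ∈ chainsAtScale X (k + 2 * wordLength X t) (n + 1) := by
  refine map_mem_of_mem_supported _ _ (fun σ hσ => ?_) hc
  have h : single σ (1 : ℤ) ∈ chainsIn (Set.range σ) n :=
    single_mem_supported fun i => Set.mem_range_self i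
  have h' : prism t n (single σ 1) ∈ chainsIn {x | ∃ i, x = σ i ∨ x = σ i * t} (n + 1) := by
    refine prism_mem_chainsIn ?_ ?_ h
    · rintro _ ⟨i, rfl⟩
      exact ⟨i, Or.inl rfl⟩
    · rintro _ ⟨i, rfl⟩
      exact ⟨i, Or.inr rfl⟩
  refine Finsupp.supported_mono (fun τ hτ i j => ?_) h'
  obtain ⟨a, ha⟩ := hτ i
  obtain ⟨b, hb⟩ := hτ j
  exact wordDist_mul_right_le hX t (hσ a b) ha hb

end Prism

section ConnectingVector

variable {X : Finset G} {χ : G → ℝ}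

/-- `φ` is an equivariant map of `q`-chains with image at scale `k`, preserving cycles and
raising valuations by at least `δ`. -/
structure IsRaisingMap (X : Finset G) (χ : G → ℝ) (δ : ℝ) (k q : ℕ)
    (φ : ((Fin (q + 1) → G) →₀ ℤ) →ₗ[ℤ] ((Fin (q + 1) → G) →₀ ℤ)) : Prop where
  equivariant : ∀ g c, φ (vertexMap (g * ·) (q + 1) c) = vertexMap (g * ·) (q + 1) (φ c)
  mem_chainsAtScale : ∀ c, φ c ∈ chainsAtScale X k (q + 1)
  raises : ∀ σ, Raises χ φ δ σ
  augBnd_eq_zero : ∀ c, augBnd q c = 0 → augBnd q (φ c) = 0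

theorem IsRaisingMap.map_mem {δ r : ℝ} {k q : ℕ}
    {φ : ((Fin (q + 1) → G) →₀ ℤ) →ₗ[ℤ] ((Fin (q + 1) → G) →₀ ℤ)}
    (hφ : IsRaisingMap X χ δ k q φ) {c : (Fin (q + 1) → G) →₀ ℤ}
    (hc : c ∈ chainsAbove χ r (q + 1)) : φ c ∈ chainsAbove χ (r + δ) (q + 1) :=
  map_mem_chainsAbove (A := Set.univ) (fun σ _ => hφ.raises σ) hc (by simp)

theorem isRaisingMap_vertexMap (hχ : IsCharacter χ)
    (t : G) (k : ℕ) : IsRaisingMap X χ (χ t) k 0 (vertexMap (· * t) 1) where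
  equivariant g c := by
    rw [vertexMap_vertexMap, vertexMap_vertexMap]
    congr 2
    funext x
    simp [mul_assoc]
  mem_chainsAtScale c := by
    have : wordLength X (1 : G) = 0 := by simpa using wordLength_le (X := X) (w := []) (by simp)
    refine (Finsupp.mem_supported _ _).2 fun σ _ i j => ?_
    have hij : i = j := Fin.ext (by omega)
    simp [hij, wordDist, this]
  raises σ r hr :=
    vertexMap_mul_right_mem_chainsAbove hχ t le_rfl (single_mem_supported fun i => hr i)
  augBnd_eq_zero c hc := by rw [augBnd_vertexMap, hc, map_zero]

theorem IsRaisingMap.exists_succ (hχ : IsCharacter χ) {t : G} {k l q : ℕ}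
    (hb : BoundsAt X {g | 0 ≤ χ g} q k l)
    {φ : ((Fin (q + 1) → G) →₀ ℤ) →ₗ[ℤ] ((Fin (q + 1) → G) →₀ ℤ)}
    (hφ : IsRaisingMap X χ (χ t) k q φ) :
    ∃ ψ, IsRaisingMap X χ (χ t) l (q + 1) ψ ∧
      ∀ c, augBnd (q + 1) (ψ c) = φ (augBnd (q + 1) c) := by
  let R : (Fin (q + 2) → G) → ((Fin (q + 2) → G) →₀ ℤ) → Prop := fun σ c =>
    augBnd (q + 1) c = φ (augBnd (q + 1) (single σ 1)) ∧
      c ∈ chainsAtScale X l (q + 2) ∧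
      ∀ r, (∀ i, r ≤ χ (σ i)) → c ∈ chainsAbove χ (r + χ t) (q + 2)
  have hRg : ∀ g σ c, R σ c → R (fun i => g * σ i) (vertexMap (g * ·) (q + 2) c) := by
    rintro g σ c ⟨h1, h2, h3⟩
    refine ⟨?_, vertexMap_mul_left_mem_chainsAtScale _ h2, fun r hr => ?_⟩
    · rw [augBnd_vertexMap, h1, ← hφ.equivariant, ← augBnd_vertexMap, vertexMap_single]
    · refine vertexMap_mul_left_mem_chainsAbove hχ g (le_of_eq ?_) (h3 (r - χ g) fun i => ?_)
      · ring
      · have := hr i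
        rw [hχ] at this
        linarith
  have hex : ∀ σ, ∃ c, R σ c := by
    intro σ
    obtain ⟨j, hj⟩ := Finite.exists_min fun i => χ (σ i)
    have hσ : single σ (1 : ℤ) ∈ chainsAbove χ (χ (σ j)) (q + 2) := single_mem_supported hj
    obtain ⟨c, h1, h2, h3⟩ := hb.translate hχ (σ j * t)
      (by rw [hχ]; exact hφ.map_mem (augBnd_mem_chainsIn hσ)) (hφ.mem_chainsAtScale _)
      (hφ.augBnd_eq_zero _ (augBnd_augBnd _ _))
    refine ⟨c, h3, h2, fun r hr => chainsAbove_anti χ ?_ _ h1⟩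
    rw [hχ]
    linarith [hr j]
  obtain ⟨ψ, hψ, hR⟩ := exists_equivariant_lift R hRg hex
  have hbd : ∀ c, augBnd (q + 1) (ψ c) = φ (augBnd (q + 1) c) := fun c =>
    linearMap_eq_of_single (F := (augBnd (q + 1)).comp ψ) (F' := φ.comp (augBnd (q + 1)))
      (fun σ => (hR σ).1) c
  refine ⟨ψ, ⟨hψ, fun c => ?_, fun σ => (hR σ).2.2, fun c hc => ?_⟩, hbd⟩
  · exact map_mem_of_mem_supported (A := Set.univ) _ _ (fun σ _ => (hR σ).2.1) (by simp)
  · rw [hbd, hc, map_zero]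

/-- Dependent choice for sequences of finite length in a family of types. -/
theorem exists_seq_of_forall_exists {α : ℕ → Type*} [∀ q, Inhabited (α q)] {m : ℕ}
    {P : ∀ q, α q → Prop} {R : ∀ q, α q → α (q + 1) → Prop} {a : α 0} (ha : P 0 a)
    (h : ∀ q < m, ∀ x, P q x → ∃ y, P (q + 1) y ∧ R q x y) :
    ∃ f : ∀ q, α q, f 0 = a ∧ (∀ q ≤ m, P q (f q)) ∧ ∀ q < m, R q (f q) (f (q + 1)) := by
  have h' : ∀ q x, ∃ y, q < m → P q x → P (q + 1) y ∧ R q x y := fun q x => by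
    by_cases hq : q < m ∧ P q x
    · obtain ⟨y, hy⟩ := h q hq.1 x hq.2
      exact ⟨y, fun _ _ => hy⟩
    · exact ⟨default, fun h1 h2 => (hq ⟨h1, h2⟩).elim⟩
  choose s hs using h'
  let f : ∀ q, α q := fun q => Nat.rec a (fun q x => s q x) q
  have hP : ∀ q ≤ m, P q (f q) := fun q => by
    induction q with
    | zero => exact fun _ => ha
    | succ q ih => exact fun hq => (hs q (f q) hq (ih (Nat.le_of_succ_le hq))).1
  exact ⟨f, rfl, hP, fun q hq => (hs q (f q) hq (hP q hq.le)).2⟩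

theorem exists_raising_chainEndo (hχ : IsCharacter χ) (hne : ∃ g, χ g ≠ 0) {m : ℕ} {kv : ℕ → ℕ}
    (hkv : ∀ q < m, BoundsAt X {g : G | 0 ≤ χ g} q (kv q) (kv (q + 1))) :
    ∃ k₀ : ℕ, ∀ k ≥ k₀,
      ∃ φ : ∀ q : ℕ, ((Fin (q + 1) → G) →₀ ℤ) →ₗ[ℤ] ((Fin (q + 1) → G) →₀ ℤ),
        IsChainEndo X k m φ ∧
        ∀ q ≤ m, ∀ c : (Fin (q + 1) → G) →₀ ℤ, VRChain X Set.univ q k c → c ≠ 0 →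
          0 < vchain χ (φ q c) - vchain χ c := by
  obtain ⟨t, ht⟩ := hχ.exists_pos hne
  obtain ⟨φ, h0, hP, hR⟩ := exists_seq_of_forall_exists
    (α := fun q => ((Fin (q + 1) → G) →₀ ℤ) →ₗ[ℤ] ((Fin (q + 1) → G) →₀ ℤ)) (m := m)
    (P := fun q φ => IsRaisingMap X χ (χ t) (kv q) q φ)
    (R := fun q φ ψ => ∀ c, augBnd (q + 1) (ψ c) = φ (augBnd (q + 1) c))
    (isRaisingMap_vertexMap hχ t (kv 0))
    (fun q hq φ hφ => hφ.exists_succ hχ (hkv q hq))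
  refine ⟨(Finset.range (m + 1)).sup kv, fun k hk => ⟨φ, ⟨?_, ?_, ?_, ?_⟩, ?_⟩⟩
  · refine fun q hq c _ => vRChain_univ_iff.2 (chainsAtScale_mono X ?_ _ ((hP q hq).2 c))
    exact (Finset.le_sup (f := kv) (Finset.mem_range.2 (by omega))).trans hk
  · exact fun q hq g c _ => (hP q hq).equivariant g c
  · intro c _
    have := augBnd_vertexMap (· * t) 0 c
    rw [vertexMap_zero, augBnd_zero, augBnd_zero] at this
    rw [h0]
    exact Finsupp.single_injective _ this
  · exact fun q hq c _ => hR q hq c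
  · intro q hq c _ hc
    obtain ⟨σ, -, i, hi⟩ := exists_vchain_eq (χ := χ) hc
    have h1 : ((χ (σ i) + χ t : ℝ) : EReal) ≤ vchain χ (φ q c) :=
      le_vchain.2 ((hP q hq).map_mem (le_vchain.1 hi.ge))
    rw [hi]
    calc (0 : EReal) < ((χ t : ℝ) : EReal) := by exact_mod_cast ht
      _ = ((χ (σ i) + χ t : ℝ) : EReal) - (χ (σ i) : EReal) := by
        rw [← EReal.coe_sub, add_sub_cancel_left]
      _ ≤ _ := EReal.sub_le_sub h1 le_rfl

end ConnectingVector

section ChainEndo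

variable {X : Finset G} {χ : G → ℝ} {k m : ℕ}
  {φ : ∀ q : ℕ, ((Fin (q + 1) → G) →₀ ℤ) →ₗ[ℤ] ((Fin (q + 1) → G) →₀ ℤ)}

theorem exists_equivariant_filling {l l' q : ℕ} (hb : BoundsAt X Set.univ q l l')
    {f : ((Fin (q + 1) → G) →₀ ℤ) →ₗ[ℤ] ((Fin (q + 1) → G) →₀ ℤ)}
    (hf : ∀ g, ∀ c ∈ chainsAtScale X k (q + 1),
      f (vertexMap (g * ·) (q + 1) c) = vertexMap (g * ·) (q + 1) (f c))
    (hl : ∀ c ∈ chainsAtScale X k (q + 1), f c ∈ chainsAtScale X l (q + 1))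
    (hz : ∀ c ∈ chainsAtScale X k (q + 1), augBnd q (f c) = 0) :
    ∃ F : ((Fin (q + 1) → G) →₀ ℤ) →ₗ[ℤ] ((Fin (q + 2) → G) →₀ ℤ),
      (∀ g c, F (vertexMap (g * ·) (q + 1) c) = vertexMap (g * ·) (q + 2) (F c)) ∧
      (∀ c ∈ chainsAtScale X k (q + 1), F c ∈ chainsAtScale X l' (q + 2)) ∧
      ∀ c ∈ chainsAtScale X k (q + 1), augBnd (q + 1) (F c) = f c := by
  let R : (Fin (q + 1) → G) → ((Fin (q + 2) → G) →₀ ℤ) → Prop := fun σ c =>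
    (∀ i j, wordDist X (σ i) (σ j) ≤ k) →
      c ∈ chainsAtScale X l' (q + 2) ∧ augBnd (q + 1) c = f (single σ 1)
  have hRg : ∀ g σ c, R σ c → R (fun i => g * σ i) (vertexMap (g * ·) (q + 2) c) := by
    intro g σ c h hσ
    simp only [wordDist_mul_left] at hσ
    obtain ⟨h1, h2⟩ := h hσ
    refine ⟨vertexMap_mul_left_mem_chainsAtScale _ h1, ?_⟩
    rw [augBnd_vertexMap, h2, ← hf _ _ (single_mem_supported hσ), vertexMap_single]
  have hex : ∀ σ, ∃ c, R σ c := by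
    intro σ
    by_cases hσ : ∀ i j, wordDist X (σ i) (σ j) ≤ k
    · have hσ' : single σ (1 : ℤ) ∈ chainsAtScale X k (q + 1) := single_mem_supported hσ
      obtain ⟨c, -, h1, h2⟩ := boundsAt_iff.1 hb _ (mem_chainsIn_univ _) (hl _ hσ') (hz _ hσ')
      exact ⟨c, fun _ => ⟨h1, h2⟩⟩
    · exact ⟨0, fun h => (hσ h).elim⟩
  obtain ⟨F, hF, hR⟩ := exists_equivariant_lift R hRg hex
  refine ⟨F, hF, fun c hc => ?_, fun c hc => ?_⟩
  · exact map_mem_of_mem_supported _ _ (fun σ hσ => (hR σ hσ).1) hc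
  · exact eq_of_mem_supported (F := (augBnd (q + 1)).comp F) (fun σ hσ => (hR σ hσ).2) hc

namespace IsChainEndo

theorem map_mem_chainsAtScale (hφ : IsChainEndo X k m φ) {q : ℕ} (hq : q ≤ m)
    {c : (Fin (q + 1) → G) →₀ ℤ} (hc : c ∈ chainsAtScale X k (q + 1)) :
    φ q c ∈ chainsAtScale X k (q + 1) :=
  vRChain_univ_iff.1 (hφ.1 q hq c (vRChain_univ_iff.2 hc))

theorem map_vertexMap (hφ : IsChainEndo X k m φ) {q : ℕ} (hq : q ≤ m) (g : G)
    {c : (Fin (q + 1) → G) →₀ ℤ} (hc : c ∈ chainsAtScale X k (q + 1)) :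
    φ q (vertexMap (g * ·) (q + 1) c) = vertexMap (g * ·) (q + 1) (φ q c) :=
  hφ.2.1 q hq g c (vRChain_univ_iff.2 hc)

theorem augBnd_map_zero (hφ : IsChainEndo X k m φ) {c : (Fin 1 → G) →₀ ℤ}
    (hc : c ∈ chainsAtScale X k 1) : augBnd 0 (φ 0 c) = augBnd 0 c := by
  rw [augBnd_zero, augBnd_zero, hφ.2.2.1 c (vRChain_univ_iff.2 hc)]

theorem augBnd_map_succ (hφ : IsChainEndo X k m φ) {q : ℕ} (hq : q + 1 ≤ m)
    {c : (Fin (q + 2) → G) →₀ ℤ} (hc : c ∈ chainsAtScale X k (q + 2)) :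
    augBnd (q + 1) (φ (q + 1) c) = φ q (augBnd (q + 1) c) :=
  hφ.2.2.2 q hq c (vRChain_univ_iff.2 hc)

/-- A chain endomorphism extending the identity on `ℤ` is equivariantly homotopic to the
identity on cycles, after enlarging the scale. -/
theorem exists_homotopy (hφ : IsChainEndo X k m φ) (hFP : TypeFP X Set.univ m) {q : ℕ}
    (hq : q < m) :
    ∃ l, k ≤ l ∧ ∃ F : ((Fin (q + 1) → G) →₀ ℤ) →ₗ[ℤ] ((Fin (q + 2) → G) →₀ ℤ),
      (∀ g c, F (vertexMap (g * ·) (q + 1) c) = vertexMap (g * ·) (q + 2) (F c)) ∧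
      (∀ c ∈ chainsAtScale X k (q + 1), F c ∈ chainsAtScale X l (q + 2)) ∧
      ∀ c ∈ chainsAtScale X k (q + 1), augBnd q c = 0 →
        augBnd (q + 1) (F c) = φ q c - c := by
  induction q with
  | zero =>
    obtain ⟨l, hl, hb⟩ := hFP 0 hq k
    obtain ⟨F, h1, h2, h3⟩ := exists_equivariant_filling (k := k) hb (f := φ 0 - LinearMap.id)
      (fun g c hc => by simp [hφ.map_vertexMap hq.le g hc])
      (fun c hc => Submodule.sub_mem _ (hφ.map_mem_chainsAtScale hq.le hc) hc)
      (fun c hc => by simp [hφ.augBnd_map_zero hc])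
    exact ⟨l, hl, F, h1, h2, fun c hc _ => h3 c hc⟩
  | succ q ih =>
    obtain ⟨l₀, hl₀, F₀, h1, h2, h3⟩ := ih (Nat.lt_of_succ_lt hq)
    obtain ⟨l, hl, hb⟩ := hFP (q + 1) hq l₀
    obtain ⟨F, h1', h2', h3'⟩ := exists_equivariant_filling (k := k) hb
      (f := φ (q + 1) - LinearMap.id - F₀.comp (augBnd (q + 1)))
      (fun g c hc => by simp [hφ.map_vertexMap hq.le g hc, augBnd_vertexMap, h1])
      (fun c hc => Submodule.sub_mem _ (Submodule.sub_mem _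
        (chainsAtScale_mono X hl₀ _ (hφ.map_mem_chainsAtScale hq.le hc))
        (chainsAtScale_mono X hl₀ _ hc)) (h2 _ (augBnd_mem_chainsAtScale hc)))
      (fun c hc => by
        simp [hφ.augBnd_map_succ hq.le hc,
          h3 _ (augBnd_mem_chainsAtScale hc) (augBnd_augBnd _ _)])
    refine ⟨l, hl₀.trans hl, F, h1', h2', fun c hc hz => ?_⟩
    rw [h3' c hc]
    simp [hz]

theorem eventually_raises (hX : Subgroup.closure (X : Set G) = ⊤) (hχ : IsCharacter χ)
    (hφ : IsChainEndo X k m φ) {q : ℕ} (hq : q ≤ m)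
    (hv : ∀ c : (Fin (q + 1) → G) →₀ ℤ, VRChain X Set.univ q k c → c ≠ 0 →
      0 < vchain χ (φ q c) - vchain χ c) :
    ∀ᶠ δ in nhdsWithin (0 : ℝ) (Set.Ioi 0), ∀ σ : Fin (q + 1) → G,
      (∀ i j, wordDist X (σ i) (σ j) ≤ k) → Raises χ (φ q) δ σ := by
  refine eventually_forall_raises hX hχ (fun g c hc => hφ.map_vertexMap hq g hc) fun σ hσ => ?_
  obtain ⟨τ, hτ, i, hi⟩ := exists_vchain_eq (χ := χ) (c := single σ (1 : ℤ)) (by simp)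
  obtain rfl : τ = σ := by simpa [Finsupp.single_apply, eq_comm] using hτ
  have h := hv _ (vRChain_univ_iff.2 (single_mem_supported hσ)) (by simp)
  rw [hi] at h
  have h' : (χ (τ i) : EReal) < vchain χ (φ q (single τ 1)) := by
    by_contra! hle
    refine (EReal.sub_le_sub hle le_rfl).not_gt (lt_of_le_of_lt ?_ h)
    rw [← EReal.coe_sub, sub_self, EReal.coe_zero]
  obtain ⟨s, hs, hs'⟩ := EReal.lt_iff_exists_real_btwn.1 h'
  have hpos : 0 < s - χ (τ i) := sub_pos.2 (by exact_mod_cast hs)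
  filter_upwards [Ioo_mem_nhdsGT hpos] with δ hδ
  exact (raises_of_mem (le_vchain.1 hs'.le) i).anti hδ.2.le

end IsChainEndo

theorem eventually_atBot_raises (hX : Subgroup.closure (X : Set G) = ⊤) (hχ : IsCharacter χ)
    {n p : ℕ} {F : ((Fin (n + 1) → G) →₀ ℤ) →ₗ[ℤ] ((Fin (p + 1) → G) →₀ ℤ)}
    (hF : ∀ g c, F (vertexMap (g * ·) (n + 1) c) = vertexMap (g * ·) (p + 1) (F c)) (k : ℕ) :
    ∀ᶠ δ in Filter.atBot, ∀ σ : Fin (n + 1) → G,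
      (∀ i j, wordDist X (σ i) (σ j) ≤ k) → Raises χ F δ σ := by
  refine eventually_forall_raises hX hχ (fun g c _ => hF g c) fun σ _ => ?_
  obtain ⟨s, hs⟩ := exists_mem_chainsAbove χ (F (single σ 1))
  filter_upwards [Filter.eventually_le_atBot (s - χ (σ 0))] with δ hδ
  exact (raises_of_mem hs 0).anti hδ

theorem typeFP_of_raising_chainEndo (hX : Subgroup.closure (X : Set G) = ⊤)
    (hFP : TypeFP X Set.univ m) (hχ : IsCharacter χ) (hne : ∃ g, χ g ≠ 0) {k₀ : ℕ}
    (h : ∀ k ≥ k₀,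
      ∃ φ : ∀ q : ℕ, ((Fin (q + 1) → G) →₀ ℤ) →ₗ[ℤ] ((Fin (q + 1) → G) →₀ ℤ),
        IsChainEndo X k m φ ∧
        ∀ q ≤ m, ∀ c : (Fin (q + 1) → G) →₀ ℤ, VRChain X Set.univ q k c → c ≠ 0 →
          0 < vchain χ (φ q c) - vchain χ c) :
    TypeFP X {g : G | 0 ≤ χ g} m := by
  intro q hq k
  obtain ⟨l, hkl, hl⟩ := hFP q hq k
  obtain ⟨K, hlK, hK⟩ : ∃ K, l ≤ K ∧ k₀ ≤ K := ⟨max l k₀, le_max_left _ _, le_max_right _ _⟩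
  obtain ⟨φ, hφ, hv⟩ := h K hK
  obtain ⟨L, hKL, F, hF1, hF2, hF3⟩ := hφ.exists_homotopy hFP hq
  obtain ⟨δ, ⟨hδ, hδ'⟩, hδ0⟩ := (((hφ.eventually_raises hX hχ hq.le (hv q hq.le)).and
    (hφ.eventually_raises hX hχ hq (hv (q + 1) hq))).and self_mem_nhdsWithin).exists
  obtain ⟨D, hD, hD0⟩ := ((eventually_atBot_raises hX hχ hF1 K).and
    (Filter.eventually_le_atBot 0)).exists
  replace hδ0 : 0 < δ := hδ0
  have push : ∀ (N : ℕ) (z : (Fin (q + 1) → G) →₀ ℤ) (c : (Fin (q + 2) → G) →₀ ℤ),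
      z ∈ chainsAbove χ 0 (q + 1) → z ∈ chainsAtScale X K (q + 1) → augBnd q z = 0 →
      c ∈ chainsAtScale X K (q + 2) → c ∈ chainsAbove χ (-(N * δ)) (q + 2) →
      augBnd (q + 1) c = z →
      ∃ y ∈ chainsAbove χ D (q + 2), y ∈ chainsAtScale X L (q + 2) ∧ augBnd (q + 1) y = z := by
    intro N
    induction N with
    | zero =>
      intro z c _ _ _ hcK hc hcz
      exact ⟨c, chainsAbove_anti χ (by simpa using hD0) _ hc, chainsAtScale_mono X hKL _ hcK, hcz⟩
    | succ N ih =>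
      intro z c hz hzK hz0 hcK hc hcz
      have hφc : augBnd (q + 1) (φ (q + 1) c) = φ q z := by rw [hφ.augBnd_map_succ hq hcK, hcz]
      obtain ⟨y, hy, hyL, hyz⟩ := ih (φ q z) (φ (q + 1) c)
        (chainsAbove_anti χ (by linarith) _ (map_mem_chainsAbove hδ hz hzK))
        (hφ.map_mem_chainsAtScale hq.le hzK) (by rw [← hφc, augBnd_augBnd])
        (hφ.map_mem_chainsAtScale hq hcK)
        (chainsAbove_anti χ (by push_cast; linarith) _ (map_mem_chainsAbove hδ' hc hcK)) hφc
      refine ⟨y - F z, Submodule.sub_mem _ hy ?_, Submodule.sub_mem _ hyL (hF2 z hzK), ?_⟩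
      · exact chainsAbove_anti χ (by linarith) _ (map_mem_chainsAbove hD hz hzK)
      · rw [map_sub, hyz, hF3 z hzK hz0, sub_sub_cancel]
  obtain ⟨t, ht0, ht⟩ := hχ.exists_ge hne (-D)
  refine ⟨L + 2 * wordLength X t, by omega, boundsAt_iff.2 fun z hz hzk hz0 => ?_⟩
  obtain ⟨c, -, hcl, hcz⟩ := boundsAt_iff.1 hl z (mem_chainsIn_univ z) hzk hz0
  obtain ⟨r, hr⟩ := exists_mem_chainsAbove χ c
  obtain ⟨N, hN⟩ := Archimedean.arch (-r) hδ0
  rw [nsmul_eq_mul] at hN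
  have hzK := chainsAtScale_mono X (hkl.le.trans hlK) _ hzk
  obtain ⟨y, hy, hyL, hyz⟩ := push N z c hz hzK hz0
    (chainsAtScale_mono X hlK _ hcl) (chainsAbove_anti χ (by linarith) _ hr) hcz
  refine ⟨vertexMap (· * t) _ y - prism t _ z, Submodule.sub_mem _
    (vertexMap_mul_right_mem_chainsAbove hχ t (by linarith) hy)
    (prism_mem_chainsIn subset_rfl (fun x hx => ?_) hz), Submodule.sub_mem _
    (vertexMap_mem_chainsAtScale (fun a b hab =>
      wordDist_mul_right_le hX t hab (Or.inr rfl) (Or.inr rfl)) hyL)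
    (prism_mem_chainsAtScale hX t (chainsAtScale_mono X hKL _ hzK)), ?_⟩
  · have : 0 ≤ χ x := hx
    change 0 ≤ χ (x * t)
    rw [hχ]
    linarith
  · rw [map_sub, augBnd_vertexMap, hyz, augBnd_prism, hz0]
    simp

end ChainEndo

theorem TypeFP.exists_connecting_vector {X : Finset G} {S : Set G} {m : ℕ}
    (h : TypeFP X S m) : ∃ kv : ℕ → ℕ, ∀ q < m, BoundsAt X S q (kv q) (kv (q + 1)) := by
  obtain ⟨kv, -, -, hkv⟩ := exists_seq_of_forall_exists (α := fun _ => ℕ) (m := m) (a := 0)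
    (P := fun _ _ => True) (R := fun q k l => BoundsAt X S q k l) trivial fun q hq k _ => by
      obtain ⟨l, -, hl⟩ := h q hq k
      exact ⟨l, trivial, hl⟩
  exact ⟨kv, hkv⟩

/-- The homological `Σ^m`-criterion: for `G` of type `FP_m` and a nonzero character `χ`,
membership `χ ∈ Σ^m(G;ℤ)` is equivalent to the existence of a connecting vector for `G_χ`,
and to the existence (for all large scales) of a valuation-raising chain endomorphism. -/
theorem stmt10 {G : Type*} [Group G] (X : Finset G)
    (hX : Subgroup.closure (X : Set G) = ⊤) (m : ℕ)
    (hFP : TypeFP X Set.univ m)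
    (χ : G → ℝ) (hχ : IsCharacter χ) (hne : ∃ g, χ g ≠ 0) :
    (TypeFP X {g : G | 0 ≤ χ g} m ↔
      ∃ kv : ℕ → ℕ, ∀ q < m, BoundsAt X {g : G | 0 ≤ χ g} q (kv q) (kv (q + 1))) ∧
    (TypeFP X {g : G | 0 ≤ χ g} m ↔
      ∃ k₀ : ℕ, ∀ k ≥ k₀,
        ∃ φ : ∀ q : ℕ, ((Fin (q + 1) → G) →₀ ℤ) →ₗ[ℤ] ((Fin (q + 1) → G) →₀ ℤ),
          IsChainEndo X k m φ ∧
          ∀ q ≤ m, ∀ c : (Fin (q + 1) → G) →₀ ℤ, VRChain X Set.univ q k c → c ≠ 0 →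
            0 < vchain χ (φ q c) - vchain χ c) := by
  have h23 := fun h : ∃ kv : ℕ → ℕ, ∀ q < m,
      BoundsAt X {g : G | 0 ≤ χ g} q (kv q) (kv (q + 1)) =>
    exists_raising_chainEndo hχ hne h.choose_spec
  refine ⟨⟨fun h => h.exists_connecting_vector, fun h => ?_⟩,
    fun h => h23 h.exists_connecting_vector, fun ⟨_, h⟩ => ?_⟩
  · obtain ⟨_, h⟩ := h23 h
    exact typeFP_of_raising_chainEndo hX hFP hχ hne h
  · exact typeFP_of_raising_chainEndo hX hFP hχ hne h
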